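/- Suppose p ≥ 3 and β ≥ 2α. Then for all distinct x, x' ∈ X, with B = B(x,x') = {a ∈ A | x(a) > x'(a)}, the strict inequality |U(x',B)| < |L(x,B)| holds, where L(x,B) = {y ∈ Y | AM(x+y) ⊆ B} and U(x',B) = {y ∈ Y | AM(x'+y) ∩ B ≠ ∅}. -/

import Mathlib

/-- The set of candidates receiving the maximum number of cards under `z`. -/
def AM {A : Type*} [Fintype A] (z : A → ℕ) : Set A := {a | ∀ b, z b ≤ z a}

/-!
If a candidate of `B` is maximal under `x' + y`, then every maximal candidate under `x + y` lies
in `B`, so `U(x', B) ⊆ L(x, B)`. To see that the inclusion is strict, pick `a` with `x' a < x a`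
and `c` with `x c < x' c`. Going from `x` to `x'` lowers the lead of `a` over `c` by at least two,
so some `y` gives `a` a lead of one under `x + y` and makes `a` trail under `x' + y`. All the
cards of `y` go to `a` and `c`, except for at most one, given to a third candidate for parity.
As `2 * α ≤ β`, no third candidate catches up with the better of `a` and `c`, so
`AM (x + y) = {a}` and `AM (x' + y) = {c}`.
-/

section FiniteSums

variable {ι M : Type*} [Fintype ι] [AddCommMonoid M]

theorem exists_lt_of_sum_eq_of_ne [LinearOrder M] [IsOrderedCancelAddMonoid M] {f g : ι → M}
    (hsum : ∑ i, f i = ∑ i, g i) (hne : f ≠ g) : ∃ i, f i < g i := by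
  by_contra! hle
  exact (Fintype.sum_strictMono (lt_of_le_of_ne hle hne.symm)).ne' hsum

theorem add_add_le_sum [PartialOrder M] [CanonicallyOrderedAdd M]
    (f : ι → M) {i j k : ι} (hij : i ≠ j) (hik : i ≠ k) (hjk : j ≠ k) :
    f i + f j + f k ≤ ∑ l, f l := by
  classical
  have := CanonicallyOrderedAdd.toIsOrderedAddMonoid (α := M)
  calc
    f i + f j + f k = ∑ l ∈ {i, j, k}, f l := by
      rw [Finset.sum_insert (by simp [hij, hik]), Finset.sum_pair hjk, add_assoc]
    _ ≤ ∑ l, f l := Finset.sum_le_sum_of_subset (Finset.subset_univ _)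

theorem finite_setOf_sum_eq (n : ℕ) : {f : ι → ℕ | ∑ i, f i = n}.Finite := by
  classical
  exact (Finset.piAntidiag Finset.univ n).finite_toSet.subset fun f hf => by simpa using hf

theorem exists_sum_eq_and_add_eq_add {a b c : ι} (hac : a ≠ c) (hba : b ≠ a) (hbc : b ≠ c)
    {m n β : ℕ} (hm : m ≤ n + β) (hn : n ≤ m + β) :
    ∃ y : ι → ℕ, ∑ i, y i = β ∧ m + y a = n + y c ∧ β ≤ y a + y c + 1 := by
  classical
  obtain ⟨u, v, e, htotal, hbalance, he⟩ :
      ∃ u v e, u + v + e = β ∧ m + u = n + v ∧ e ≤ 1 :=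
    ⟨(β + n - m) / 2, (β + m - n) / 2, (β + n - m) % 2, by omega, by omega, by omega⟩
  let y : ι → ℕ := Pi.single a u + Pi.single c v + Pi.single b e
  have hya : y a = u := by simp [y, hac, hba.symm]
  have hyc : y c = v := by simp [y, hac.symm, hbc.symm]
  refine ⟨y, ?_, ?_, ?_⟩
  · simp [y, Finset.sum_add_distrib, htotal]
  · rwa [hya, hyc]
  · omega

end FiniteSums

section Voting

variable {A : Type*} [Fintype A]

theorem AM_eq_singleton {z : A → ℕ} {a : A} (h : ∀ d ≠ a, z d < z a) : AM z = {a} := by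
  ext d
  refine ⟨fun hd => by_contra fun hda => (h d hda).not_ge (hd a), ?_⟩
  rintro rfl b
  obtain rfl | hb := eq_or_ne b d
  exacts [le_rfl, (h b hb).le]

theorem AM_add_subset_of_inter_nonempty {x x' y : A → ℕ}
    (h : (AM (x' + y) ∩ {a | x' a < x a}).Nonempty) : AM (x + y) ⊆ {a | x' a < x a} := by
  obtain ⟨a, ha_max, (ha : x' a < x a)⟩ := h
  intro b hb_max
  have hx' : x' b + y b ≤ x' a + y a := ha_max b
  have hx : x a + y a ≤ x b + y b := hb_max a
  change x' b < x b
  omega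

theorem AM_add_eq_singleton {x y : A → ℕ} {a c : A} (hxy : 2 * ∑ i, x i ≤ ∑ i, y i)
    (hac : a ≠ c) (hxa : 0 < x a) (hlead : x c + y c < x a + y a)
    (hy : ∑ i, y i ≤ y a + y c + 1) : AM (x + y) = {a} := by
  refine AM_eq_singleton fun d hda => ?_
  obtain rfl | hdc := eq_or_ne d c
  · exact hlead
  have hxsum : x d + x a + x c ≤ ∑ i, x i := add_add_le_sum x hda hdc hac
  have hysum : y d + y a + y c ≤ ∑ i, y i := add_add_le_sum y hda hdc hac
  rw [Pi.add_apply, Pi.add_apply]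
  omega

theorem exists_AM_add_eq_singleton_pair {x x' : A → ℕ} {a c : A} {β : ℕ}
    (hcard : 3 ≤ Fintype.card A) (hsum : ∑ i, x i = ∑ i, x' i) (hβ : 2 * ∑ i, x i ≤ β)
    (ha : x' a < x a) (hc : x c < x' c) :
    ∃ y : A → ℕ, ∑ i, y i = β ∧ AM (x + y) = {a} ∧ AM (x' + y) = {c} := by
  have hac : a ≠ c := by
    rintro rfl
    exact ha.asymm hc
  obtain ⟨b, hba, hbc⟩ := ENat.exists_ne_ne_of_three_le (α := A)
    (by rw [ENat.card_eq_coe_fintype_card]; exact_mod_cast hcard) a c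
  have hxa : x a ≤ ∑ i, x i := Finset.single_le_sum_of_canonicallyOrdered (Finset.mem_univ a)
  have hxc : x c ≤ ∑ i, x i := Finset.single_le_sum_of_canonicallyOrdered (Finset.mem_univ c)
  obtain ⟨y, rfl, hlead, hy⟩ := exists_sum_eq_and_add_eq_add hac hba hbc
    (m := x a) (n := x c + 1) (β := β) (by omega) (by omega)
  refine ⟨y, rfl, AM_add_eq_singleton hβ hac (by omega) (by omega) hy,
    AM_add_eq_singleton (hsum ▸ hβ) hac.symm (by omega) (by omega) (by omega)⟩

end Voting

/-- If `p ≥ 3` and `β ≥ 2α`, then for all distinct `x, x' ∈ X`, with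
`B = B(x,x') = {a | x a > x' a}`, we have `|U(x',B)| < |L(x,B)|`. -/
theorem card_U_lt_card_L
    {A : Type*} [Fintype A] (α β : ℕ) (hα : 1 ≤ α) (hβ : 1 ≤ β)
    (hp : 3 ≤ Fintype.card A) (hβα : 2 * α ≤ β)
    (x x' : A → ℕ) (hx : (∑ a, x a) = α) (hx' : (∑ a, x' a) = α) (hne : x ≠ x')
    (B : Set A) (hB : B = {a | x' a < x a}) :
    {y : A → ℕ | (∑ a, y a) = β ∧ (AM (x' + y) ∩ B).Nonempty}.ncard <
      {y : A → ℕ | (∑ a, y a) = β ∧ AM (x + y) ⊆ B}.ncard := by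
  subst hB hx
  obtain ⟨a, ha⟩ := exists_lt_of_sum_eq_of_ne hx' hne.symm
  obtain ⟨c, hc⟩ := exists_lt_of_sum_eq_of_ne hx'.symm hne
  obtain ⟨y, hy, hxy, hx'y⟩ := exists_AM_add_eq_singleton_pair hp hx'.symm hβα ha hc
  refine Set.ncard_lt_ncard (Set.ssubset_iff_exists.2 ⟨?_, y, ⟨hy, ?_⟩, ?_⟩)
    ((finite_setOf_sum_eq β).subset fun _ h => h.1)
  · exact fun z hz => ⟨hz.1, AM_add_subset_of_inter_nonempty hz.2⟩
  · rwa [hxy, Set.singleton_subset_iff]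
  · rintro ⟨-, h⟩
    rw [hx'y, Set.singleton_inter_nonempty] at h
    exact hc.asymm h
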